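/- Theorem 4: For the quaternary sequences u₇ = φ[s₂, s₄+1], u₁₃ = φ[s₁+1, s₂+1], u₁₅ = φ[s₂+1, s₄+1] of period p, the 4-adic complexity satisfies Φ₄(u_i) ≥ ⌊log₄((4^p − 1)/((1+2p)(1+6p)(1+8p)) + 1)⌋ for i = 7, 13, 15. -/

import Mathlib

open Finset

/-- The cyclotomic class `D_i` of order 4 modulo `p` with respect to the
primitive root `θ`: `{θ^(i+4j) mod p : 0 ≤ j < (p-1)/4}`. -/
def cycD (p θ i : ℕ) : Finset ℕ :=
  (Finset.range ((p - 1) / 4)).image fun j => θ ^ (i + 4 * j) % p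

/-- The binary sequence `s₁` with support set `D₀ ∪ D₁`. -/
def seqS1 (p θ : ℕ) (t : ℕ) : ℕ := if t ∈ cycD p θ 0 ∪ cycD p θ 1 then 1 else 0

/-- The binary sequence `s₂` with support set `D₀ ∪ D₃`. -/
def seqS2 (p θ : ℕ) (t : ℕ) : ℕ := if t ∈ cycD p θ 0 ∪ cycD p θ 3 then 1 else 0

/-- The binary sequence `s₃` with support set `D₁ ∪ D₂`. -/
def seqS3 (p θ : ℕ) (t : ℕ) : ℕ := if t ∈ cycD p θ 1 ∪ cycD p θ 2 then 1 else 0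

/-- The binary sequence `s₄` with support set `D₂ ∪ D₃`. -/
def seqS4 (p θ : ℕ) (t : ℕ) : ℕ := if t ∈ cycD p θ 2 ∪ cycD p θ 3 then 1 else 0

/-- The bitwise complement `s + 1` of a binary sequence. -/
def seqCompl (s : ℕ → ℕ) (t : ℕ) : ℕ := 1 - s t

/-- The inverse Gray mapping: `φ[0,0]=0, φ[0,1]=1, φ[1,1]=2, φ[1,0]=3`. -/
def gray (a b : ℕ) : ℕ := if a = 0 then b else 3 - b

/-- The quaternary sequence `φ[r,s] : t ↦ φ[r(t), s(t)]`. -/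
def graySeq (r s : ℕ → ℕ) (t : ℕ) : ℕ := gray (r t) (s t)

/-- The generating value `U(4) = Σ_{t=0}^{p-1} u(t)·4^t` of a quaternary
sequence `u` of period `p`. -/
def seqVal (p : ℕ) (u : ℕ → ℕ) : ℕ := ∑ t ∈ Finset.range p, u t * 4 ^ t

/-- The 4-adic complexity `Φ₄(u) = ⌊log₄((4^p − 1)/gcd(4^p − 1, U(4)) + 1)⌋`
of a quaternary sequence `u` of period `p`. -/
noncomputable def adicComplexity4 (p : ℕ) (u : ℕ → ℕ) : ℤ :=
  ⌊Real.logb 4 (((4 ^ p - 1 : ℕ) : ℝ) / ((Nat.gcd (4 ^ p - 1) (seqVal p u) : ℕ) : ℝ) + 1)⌋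

/-!
With `A = (-1) ^ a` and `B = (-1) ^ b`, the Gray map is `2 φ[a, b] = 3 - 2 A - A B`. For the three
pairs of sequences `A B` is `τ χ`, where `χ` is the quadratic character and `τ = ±1`, while `A` is
(off `0`) a function `H` with `H (a² t) = χ(a) H(t)`.

Let `d` divide both `∑ 4 ^ t` and `U(4)`. Modulo `d`, `t ↦ 4 ^ t` is an additive character of
`ℤ / p` with vanishing sum, and the corresponding Gauss-type sums `Ĥ`, `χ̂` satisfy
`2 Ĥ + τ χ̂ = ±1`, `χ̂² = p` and `Ĥ² = ε p + (m + ε) χ̂`, where `H(-t) = ε H(t)` and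
`m = ∑ H(t) H(1 - t)`. Eliminating `Ĥ` and `χ̂` shows that `d` divides
`((4 ε - 1) p - 1)² - p k²` for some integer `k` with `|k| ≤ 4 p + 6`. This integer is congruent to
`1` modulo `p`, hence nonzero, and so it bounds `d`.
-/

section CharSum

variable {G R : Type*} [AddCommGroup G] [Fintype G] [CommRing R]

/-- The character sum `∑ t, K t * ψ t` of an integer-valued function `K`, as a linear map in `K`.
It plays the role of a Gauss sum; `R` need not be a domain, since it will be `ℤ / d` for a common
divisor `d` of `∑ 4 ^ t` and `U(4)`. -/
def charSum (ψ : AddChar G R) : (G → ℤ) →ₗ[ℤ] R :=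
  Fintype.linearCombination ℤ ψ

theorem charSum_apply (ψ : AddChar G R) (K : G → ℤ) : charSum ψ K = ∑ t, (K t : R) * ψ t := by
  simp only [charSum, Fintype.linearCombination_apply, zsmul_eq_mul]

theorem charSum_of_eq_add_of_ne_zero {ψ : AddChar G R} (hψ : ∑ t, ψ t = 0) {f K : G → ℤ} {a : ℤ}
    (hf : ∀ t ≠ 0, f t = a + K t) :
    charSum ψ f = charSum ψ K + (f 0 - a - K 0 : ℤ) := by
  classical
  have hfK : f = (fun _ ↦ a) + K + Pi.single 0 (f 0 - a - K 0) := by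
    funext t
    obtain rfl | ht := eq_or_ne t 0
    · simp
    · simp [ht, hf t ht]
  have hconst : charSum ψ (fun _ ↦ a) = 0 := by
    rw [charSum_apply, ← Finset.mul_sum, hψ, mul_zero]
  have hsingle (b : ℤ) : charSum ψ (Pi.single 0 b) = b := by
    rw [charSum, Fintype.linearCombination_apply_single, AddChar.map_zero_eq_one, zsmul_one]
  conv_lhs => rw [hfK]
  rw [map_add, map_add, hconst, hsingle, zero_add]

/-- The additive convolution of `K : G → ℤ` with itself, i.e. the coefficients of the square of
`K` in the group ring `ℤ[G]`. -/
def selfConv (K : G → ℤ) (c : G) : ℤ :=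
  ∑ t, K t * K (c - t)

theorem charSum_sq (ψ : AddChar G R) (K : G → ℤ) :
    charSum ψ K ^ 2 = charSum ψ (selfConv K) := by
  simp only [charSum_apply, selfConv, Int.cast_sum, Int.cast_mul, sq, Finset.sum_mul]
  rw [Finset.sum_comm]
  refine Finset.sum_congr rfl fun t _ ↦ ?_
  rw [Finset.mul_sum]
  refine Fintype.sum_equiv (Equiv.addRight t) _ _ fun s ↦ ?_
  rw [Equiv.coe_addRight, add_sub_cancel_right, AddChar.map_add_eq_mul]
  ring

theorem sum_selfConv (K : G → ℤ) : ∑ c, selfConv K c = (∑ t, K t) ^ 2 := by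
  simpa [charSum_apply] using (charSum_sq (1 : AddChar G ℤ) K).symm

theorem abs_selfConv_le_card {K : G → ℤ} (hK : ∀ t, |K t| ≤ 1) (c : G) :
    |selfConv K c| ≤ Fintype.card G :=
  calc |selfConv K c| ≤ ∑ t, |K t * K (c - t)| := Finset.abs_sum_le_sum_abs _ _
    _ ≤ ∑ _t : G, (1 : ℤ) := by
      refine Finset.sum_le_sum fun t _ ↦ ?_
      rw [abs_mul]
      exact mul_le_one₀ (hK t) (abs_nonneg _) (hK _)
    _ = Fintype.card G := by simp

theorem selfConv_zero_of_neg {K : G → ℤ} {ε : ℤ} (hK : ∀ t, K (-t) = ε * K t) :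
    selfConv K 0 = ε * ∑ t, K t ^ 2 := by
  rw [selfConv, Finset.mul_sum]
  refine Finset.sum_congr rfl fun t _ ↦ ?_
  rw [zero_sub, hK]
  ring

theorem sum_eq_of_eq_of_ne_zero {f : G → ℤ} {a : ℤ} (hf : ∀ t ≠ 0, f t = a) :
    ∑ t, f t = f 0 + (Fintype.card G - 1) * a := by
  classical
  rw [← Finset.add_sum_erase _ _ (Finset.mem_univ (0 : G)),
    Finset.sum_congr rfl fun t ht ↦ hf t (Finset.ne_of_mem_erase ht), Finset.sum_const,
    Finset.card_erase_of_mem (Finset.mem_univ _), Finset.card_univ, nsmul_eq_mul,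
    Nat.cast_pred Fintype.card_pos]

end CharSum

section FiniteField

variable {F R : Type*} [Field F] [Fintype F] [CommRing R]

theorem selfConv_mul_left {K : F → ℤ} {a : F} (ha : a ≠ 0) {s : ℤ}
    (hK : ∀ t, K (a * t) = s * K t) (c : F) :
    selfConv K (a * c) = s ^ 2 * selfConv K c := by
  rw [selfConv, selfConv, Finset.mul_sum]
  refine (Fintype.sum_equiv (Equiv.mulLeft₀ a ha) _ _ fun t ↦ ?_).symm
  rw [Equiv.mulLeft₀_apply, ← mul_sub, hK, hK]
  ring

variable [DecidableEq F]

theorem selfConv_quadraticChar (hF : ringChar F ≠ 2) {c : F} (hc : c ≠ 0) :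
    selfConv (quadraticChar F) c = -quadraticChar F (-1) :=
  calc selfConv (quadraticChar F) c
      = quadraticChar F c ^ 2 * selfConv (quadraticChar F) 1 := by
        conv_lhs => rw [← mul_one c]
        exact selfConv_mul_left hc (map_mul _ c) 1
    _ = jacobiSum (quadraticChar F) (quadraticChar F)⁻¹ := by
        rw [quadraticChar_sq_one hc, one_mul, (quadraticChar_isQuadratic F).inv]
        rfl
    _ = -quadraticChar F (-1) := jacobiSum_nontrivial_inv (quadraticChar_ne_one hF)

theorem charSum_quadraticChar_sq (hF : ringChar F ≠ 2) {ψ : AddChar F R} (hψ : ∑ t, ψ t = 0) :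
    charSum ψ (quadraticChar F) ^ 2 = quadraticChar F (-1) * Fintype.card F := by
  have hzero : selfConv (quadraticChar F) 0 = quadraticChar F (-1) * (Fintype.card F - 1) := by
    have hneg (t : F) : quadraticChar F (-t) = quadraticChar F (-1) * quadraticChar F t := by
      rw [← map_mul, neg_one_mul]
    rw [selfConv_zero_of_neg hneg,
      sum_eq_of_eq_of_ne_zero (a := 1) fun t ht ↦ quadraticChar_sq_one ht]
    simp
  have hconv : ∀ t ≠ 0, selfConv (quadraticChar F) t = -quadraticChar F (-1) + (0 : F → ℤ) t :=
    fun t ht ↦ by rw [selfConv_quadraticChar hF ht, Pi.zero_apply, add_zero]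
  rw [charSum_sq, charSum_of_eq_add_of_ne_zero hψ hconv, hzero, map_zero, Pi.zero_apply]
  push_cast
  ring

/-- A `±1`-valued function on `Fˣ`, extended by zero, on which multiplication by a square `a ^ 2`
acts through the quadratic character of `a`. For a quartic character `χ` (so that `χ (a ^ 2)` is
the quadratic character of `a`) these are the combinations `((1 ± i) χ + (1 ∓ i) χ̄) / 2` and their
negatives, i.e. the signs that are constant on the cyclotomic classes of order 4 and opposite on
`D_i` and `D_{i+2}`. -/
structure IsQuarticSign (H : F → ℤ) : Prop where
  sq_eq_one : ∀ t ≠ 0, H t ^ 2 = 1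
  map_sq_mul : ∀ a t, H (a ^ 2 * t) = quadraticChar F a * H t

namespace IsQuarticSign

variable {H : F → ℤ} (hH : IsQuarticSign H)
include hH

theorem map_zero : H 0 = 0 := by
  simpa using hH.map_sq_mul 0 0

theorem abs_le_one (t : F) : |H t| ≤ 1 := by
  obtain rfl | ht := eq_or_ne t 0
  · simp [hH.map_zero]
  · exact (sq_le_one_iff_abs_le_one _).mp (hH.sq_eq_one t ht).le

theorem sum_sq : ∑ t, H t ^ 2 = Fintype.card F - 1 := by
  rw [sum_eq_of_eq_of_ne_zero hH.sq_eq_one, hH.map_zero]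
  ring

theorem sum_eq_zero (hF : ringChar F ≠ 2) : ∑ t, H t = 0 := by
  obtain ⟨g, hg⟩ := quadraticChar_exists_neg_one hF
  have hg0 : g ≠ 0 := by
    rintro rfl
    simp at hg
  have hneg : ∑ t, -H t = ∑ t, H t :=
    Fintype.sum_equiv (Equiv.mulLeft₀ (g ^ 2) (pow_ne_zero 2 hg0)) _ _ fun t ↦ by
      rw [Equiv.mulLeft₀_apply, hH.map_sq_mul, hg, neg_one_mul]
  rw [Finset.sum_neg_distrib] at hneg
  exact neg_eq_self.mp hneg

theorem quadraticChar_neg_one_eq_one : quadraticChar F (-1) = 1 := by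
  have h1 : H 1 ≠ 0 := fun h ↦ by simpa [h] using hH.sq_eq_one 1 one_ne_zero
  have h := hH.map_sq_mul (-1) 1
  rw [neg_one_sq, one_mul] at h
  exact (mul_eq_right₀ h1).mp h.symm

theorem exists_map_neg : ∃ ε : ℤ, ε ^ 2 = 1 ∧ ∀ t, H (-t) = ε * H t := by
  have hneg : IsSquare (-1 : F) :=
    (quadraticChar_one_iff_isSquare (neg_ne_zero.mpr one_ne_zero)).mp
      hH.quadraticChar_neg_one_eq_one
  obtain ⟨i, hi⟩ := hneg
  have hi0 : i ≠ 0 := by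
    rintro rfl
    simp at hi
  refine ⟨quadraticChar F i, quadraticChar_sq_one hi0, fun t ↦ ?_⟩
  rw [← hH.map_sq_mul, sq, ← hi, neg_one_mul]

theorem selfConv_congr {b c : F} (hc : c ≠ 0) (h : quadraticChar F b = quadraticChar F c) :
    selfConv H b = selfConv H c := by
  have hb : b ≠ 0 := by
    rwa [Ne, ← quadraticChar_eq_zero_iff, h, quadraticChar_eq_zero_iff]
  have hbc : quadraticChar F (b * c) = 1 := by
    rw [map_mul, h, ← sq, quadraticChar_sq_one hc]
  obtain ⟨a, ha⟩ := (quadraticChar_one_iff_isSquare (mul_ne_zero hb hc)).mp hbc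
  have hac : a / c ≠ 0 := by
    refine div_ne_zero ?_ hc
    rintro rfl
    exact mul_ne_zero hb hc (by simpa using ha)
  have hb_eq : b = (a / c) ^ 2 * c := by
    field_simp
    rw [ha, sq]
  rw [hb_eq, selfConv_mul_left (pow_ne_zero 2 hac) (hH.map_sq_mul _), quadraticChar_sq_one hac,
    one_mul]

variable {ε : ℤ} (hε : ∀ t, H (-t) = ε * H t)
include hε

theorem selfConv_zero : selfConv H 0 = ε * (Fintype.card F - 1) := by
  rw [selfConv_zero_of_neg hε, hH.sum_sq]

-- `selfConv H` takes the value `selfConv H 1` on squares and `selfConv H c` on nonsquares, so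
-- pairing `t` with `c * t` and using that `selfConv H` sums to zero determines the sum of the two.
theorem selfConv_one_add_selfConv (hF : ringChar F ≠ 2) {c : F} (hc : quadraticChar F c = -1) :
    selfConv H 1 + selfConv H c = -2 * ε := by
  have hc0 : c ≠ 0 := by
    rintro rfl
    simp at hc
  have hpair : ∀ t ≠ 0, selfConv H t + selfConv H (c * t) = selfConv H 1 + selfConv H c := by
    intro t ht
    rcases quadraticChar_dichotomy ht with hχ | hχ
    · rw [hH.selfConv_congr (b := t) one_ne_zero (by rw [hχ, map_one]),
        hH.selfConv_congr (b := c * t) hc0 (by rw [map_mul, hχ, mul_one])]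
    · rw [hH.selfConv_congr (b := t) hc0 (by rw [hχ, hc]),
        hH.selfConv_congr (b := c * t) one_ne_zero
          (by rw [map_mul, hc, hχ, map_one, neg_mul_neg, one_mul]),
        add_comm]
  have hsum : ∑ t, selfConv H t = 0 := by
    rw [sum_selfConv, hH.sum_eq_zero hF, zero_pow two_ne_zero]
  have hsum_mul : ∑ t, selfConv H (c * t) = 0 := by
    rw [← hsum]
    exact Fintype.sum_equiv (Equiv.mulLeft₀ c hc0) _ _ fun _ ↦ rfl
  have htotal := sum_eq_of_eq_of_ne_zero hpair
  rw [Finset.sum_add_distrib, hsum, hsum_mul, mul_zero, hH.selfConv_zero hε] at htotal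
  have hcard : (Fintype.card F - 1 : ℤ) ≠ 0 := by
    have := Fintype.one_lt_card (α := F)
    omega
  apply mul_left_cancel₀ hcard
  linear_combination -htotal

theorem selfConv_eq (hF : ringChar F ≠ 2) {c : F} (hc : c ≠ 0) :
    selfConv H c = -ε + (selfConv H 1 + ε) * quadraticChar F c := by
  rcases quadraticChar_dichotomy hc with hχ | hχ
  · rw [hH.selfConv_congr one_ne_zero (hχ.trans (map_one _).symm), hχ]
    ring
  · rw [hχ]
    linear_combination hH.selfConv_one_add_selfConv hε hF hχ

theorem charSum_sq (hF : ringChar F ≠ 2) {ψ : AddChar F R} (hψ : ∑ t, ψ t = 0) :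
    charSum ψ H ^ 2 =
      ε * Fintype.card F + (selfConv H 1 + ε) * charSum ψ (quadraticChar F) := by
  have hconv : ∀ t ≠ 0,
      selfConv H t = -ε + ((selfConv H 1 + ε) • ⇑(quadraticChar F)) t := fun t ht ↦ by
    rw [Pi.smul_apply, smul_eq_mul, hH.selfConv_eq hε hF ht]
  rw [_root_.charSum_sq, charSum_of_eq_add_of_ne_zero hψ hconv, map_smul, zsmul_eq_mul,
    hH.selfConv_zero hε]
  simp only [Pi.smul_apply, quadraticChar_zero, smul_zero]
  push_cast
  ring

end IsQuarticSign

theorem IsQuarticSign.neg {H : F → ℤ} (hH : IsQuarticSign H) : IsQuarticSign (-H) where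
  sq_eq_one t ht := by rw [Pi.neg_apply, neg_sq, hH.sq_eq_one t ht]
  map_sq_mul a t := by rw [Pi.neg_apply, Pi.neg_apply, hH.map_sq_mul, mul_neg]

-- Squaring `2 * charSum ψ H = δ - τ * charSum ψ χ` and inserting the values of both squares gives
-- `((4ε - 1) q - 1) = -(4 (selfConv H 1 + ε) + 2τδ) * charSum ψ χ`, and one more squaring removes
-- the remaining character sum.
theorem IsQuarticSign.sq_eq_card_mul_sq {H : F → ℤ} (hH : IsQuarticSign H) {ε : ℤ}
    (hε : ∀ t, H (-t) = ε * H t) (hF : ringChar F ≠ 2) {ψ : AddChar F R} (hψ : ∑ t, ψ t = 0)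
    {τ δ : ℤ} (hτ : τ ^ 2 = 1) (hδ : δ ^ 2 = 1)
    (hlin : 2 * charSum ψ H + τ * charSum ψ (quadraticChar F) = δ) :
    (((4 * ε - 1) * Fintype.card F - 1 : ℤ) : R) ^ 2 =
      Fintype.card F * ((4 * (selfConv H 1 + ε) + 2 * τ * δ : ℤ) : R) ^ 2 := by
  have hHsq := hH.charSum_sq hε hF hψ
  have hχsq := charSum_quadraticChar_sq hF hψ
  rw [hH.quadraticChar_neg_one_eq_one, Int.cast_one, one_mul] at hχsq
  have hτ' : (τ : R) ^ 2 = 1 := mod_cast congrArg (Int.cast : ℤ → R) hτ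
  have hδ' : (δ : R) ^ 2 = 1 := mod_cast congrArg (Int.cast : ℤ → R) hδ
  set w := charSum ψ (quadraticChar F)
  have hlin_sq : (((4 * ε - 1) * Fintype.card F - 1 : ℤ) : R) =
      -((4 * (selfConv H 1 + ε) + 2 * τ * δ : ℤ) : R) * w := by
    push_cast
    linear_combination (2 * charSum ψ H - τ * w + δ) * hlin - 4 * hHsq + τ ^ 2 * hχsq
      + Fintype.card F * hτ' + hδ'
  rw [hlin_sq, ← hχsq]
  ring

end FiniteField

section QuaternarySequences

variable {p : ℕ} {r s : ℕ → ℕ}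

/-- The `±1` form `t ↦ (-1) ^ s(t)` of a binary sequence `s` of period `p`, as a function on
`ZMod p`. The value at `0` is set to `0`, so that it can be compared with multiplicative
characters. -/
def bipolar (p : ℕ) (s : ℕ → ℕ) (t : ZMod p) : ℤ :=
  if t = 0 then 0 else (-1) ^ s t.val

theorem bipolar_zero (p : ℕ) (s : ℕ → ℕ) : bipolar p s 0 = 0 :=
  if_pos rfl

theorem bipolar_of_ne_zero (s : ℕ → ℕ) {t : ZMod p} (ht : t ≠ 0) :
    bipolar p s t = (-1) ^ s t.val :=
  if_neg ht

theorem bipolar_seqCompl (hs : ∀ t, s t ≤ 1) : bipolar p (seqCompl s) = -bipolar p s := by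
  funext t
  obtain rfl | ht := eq_or_ne t 0
  · simp only [Pi.neg_apply, bipolar_zero, neg_zero]
  · rw [Pi.neg_apply, bipolar_of_ne_zero _ ht, bipolar_of_ne_zero _ ht, seqCompl]
    obtain h | h := Nat.le_one_iff_eq_zero_or_eq_one.mp (hs t.val) <;> simp [h]

theorem two_mul_gray {a b : ℕ} (ha : a ≤ 1) (hb : b ≤ 1) :
    (2 * gray a b : ℤ) = 3 - (2 + (-1) ^ b) * (-1) ^ a := by
  interval_cases a <;> interval_cases b <;> rfl

theorem two_mul_gray_one_sub_three_sq {a : ℕ} (ha : a ≤ 1) : (2 * gray a 1 - 3 : ℤ) ^ 2 = 1 := by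
  interval_cases a <;> rfl

theorem sum_range_eq_sum_zmod {M : Type*} [AddCommMonoid M] [NeZero p] (f : ℕ → M) :
    ∑ t ∈ Finset.range p, f t = ∑ t : ZMod p, f t.val := by
  obtain _ | n := p
  · exact absurd rfl (NeZero.ne 0)
  · exact (Fin.sum_univ_eq_sum_range f (n + 1)).symm

variable {R : Type*} [CommRing R]

theorem sum_zmodChar [NeZero p] {ζ : R} (hζ : ζ ^ p = 1) :
    ∑ t, AddChar.zmodChar p hζ t = ∑ t ∈ Finset.range p, ζ ^ t := by
  rw [sum_range_eq_sum_zmod]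
  exact Finset.sum_congr rfl fun t _ ↦ AddChar.zmodChar_apply hζ t

theorem natCast_seqVal [NeZero p] (h4 : (4 : R) ^ p = 1) (u : ℕ → ℕ) :
    (seqVal p u : R) = charSum (AddChar.zmodChar p h4) fun t ↦ (u t.val : ℤ) := by
  rw [seqVal, sum_range_eq_sum_zmod, charSum_apply]
  push_cast
  simp only [AddChar.zmodChar_apply]

theorem two_mul_seqVal_graySeq [NeZero p] (h4 : (4 : R) ^ p = 1)
    (hsum : ∑ t, AddChar.zmodChar p h4 t = 0) (hr : ∀ t, r t ≤ 1) (hs : ∀ t, s t ≤ 1) :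
    2 * (seqVal p (graySeq r s) : R) =
      -(2 * charSum (AddChar.zmodChar p h4) (bipolar p r) +
        charSum (AddChar.zmodChar p h4) (bipolar p r * bipolar p s)) +
      (2 * graySeq r s 0 - 3 : ℤ) := by
  have hgray : ∀ t ≠ 0, ((2 : ℤ) • fun t : ZMod p ↦ (graySeq r s t.val : ℤ)) t =
      3 + (-((2 : ℤ) • bipolar p r + bipolar p r * bipolar p s)) t := by
    intro t ht
    simp only [Pi.smul_apply, Pi.neg_apply, Pi.add_apply, Pi.mul_apply, smul_eq_mul,
      bipolar_of_ne_zero _ ht, graySeq, two_mul_gray (hr _) (hs _)]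
    ring
  have hcharSum := charSum_of_eq_add_of_ne_zero hsum hgray
  rw [map_smul, map_neg, map_add, map_smul, ← natCast_seqVal h4] at hcharSum
  simpa [bipolar_zero] using hcharSum

theorem exists_dvd_sq_sub_mul_sq [Fact p.Prime] (hp : p ≠ 2) (hr : ∀ t, r t ≤ 1)
    (hs : ∀ t, s t ≤ 1) (hs0 : s 0 = 1) (hH : IsQuarticSign (bipolar p r)) {τ : ℤ}
    (hτ : τ ^ 2 = 1) (hrs : bipolar p r * bipolar p s = τ • ⇑(quadraticChar (ZMod p))) {d : ℕ}
    (hd : d ∣ ∑ t ∈ Finset.range p, 4 ^ t) (hU : d ∣ seqVal p (graySeq r s)) :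
    ∃ ε k : ℤ, |ε| ≤ 1 ∧ |k| ≤ 4 * p + 6 ∧ (d : ℤ) ∣ ((4 * ε - 1) * p - 1) ^ 2 - p * k ^ 2 := by
  have hgeom : ∑ t ∈ Finset.range p, (4 : ZMod d) ^ t = 0 :=
    mod_cast (ZMod.natCast_eq_zero_iff _ d).mpr hd
  have h4 : (4 : ZMod d) ^ p = 1 := by
    rw [← sub_eq_zero, ← geom_sum_mul, hgeom, zero_mul]
  have hψ : ∑ t, AddChar.zmodChar p h4 t = 0 := by rw [sum_zmodChar, hgeom]
  obtain ⟨ε, hε, hHneg⟩ := hH.exists_map_neg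
  set δ : ℤ := 2 * graySeq r s 0 - 3 with hδ_def
  have hδ : δ ^ 2 = 1 := by rw [hδ_def, graySeq, hs0, two_mul_gray_one_sub_three_sq (hr 0)]
  have hlin : 2 * charSum (AddChar.zmodChar p h4) (bipolar p r) +
      τ * charSum (AddChar.zmodChar p h4) (quadraticChar (ZMod p)) = δ := by
    have h := two_mul_seqVal_graySeq h4 hψ hr hs
    rw [(ZMod.natCast_eq_zero_iff _ d).mpr hU, hrs, map_smul, zsmul_eq_mul] at h
    linear_combination h
  have hF : ringChar (ZMod p) ≠ 2 := by rwa [ZMod.ringChar_zmod_n]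
  have hsq := hH.sq_eq_card_mul_sq hHneg hF hψ hτ hδ hlin
  rw [ZMod.card] at hsq
  have hε1 : |ε| ≤ 1 := (sq_le_one_iff_abs_le_one ε).mp hε.le
  have hτδ : |τ * δ| ≤ 1 := (sq_le_one_iff_abs_le_one _).mp (by rw [mul_pow, hτ, hδ, one_mul])
  have hm := abs_selfConv_le_card hH.abs_le_one 1
  rw [ZMod.card] at hm
  refine ⟨ε, 4 * (selfConv (bipolar p r) 1 + ε) + 2 * τ * δ, hε1, ?_, ?_⟩
  · obtain ⟨hε₁, hε₂⟩ := abs_le.mp hε1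
    obtain ⟨hτδ₁, hτδ₂⟩ := abs_le.mp hτδ
    obtain ⟨hm₁, hm₂⟩ := abs_le.mp hm
    exact abs_le.mpr ⟨by linarith, by linarith⟩
  · rw [← ZMod.intCast_zmod_eq_zero_iff_dvd]
    push_cast at hsq ⊢
    linear_combination hsq

theorem three_mul_le_of_dvd (hp : 5 ≤ p) {d : ℕ} {ε k : ℤ} (hε : |ε| ≤ 1)
    (hk : |k| ≤ 4 * p + 6) (hd : (d : ℤ) ∣ ((4 * ε - 1) * p - 1) ^ 2 - p * k ^ 2) :
    3 * d ≤ (1 + 2 * p) * (1 + 6 * p) * (1 + 8 * p) := by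
  set D : ℤ := ((4 * ε - 1) * p - 1) ^ 2 - p * k ^ 2 with hD
  have hp' : (5 : ℤ) ≤ p := by exact_mod_cast hp
  have hD0 : D ≠ 0 := by
    intro h
    have hp1 : (p : ℤ) ∣ 1 :=
      ⟨k ^ 2 - (4 * ε - 1) ^ 2 * p + 2 * (4 * ε - 1), by linear_combination h - hD⟩
    have := Int.le_of_dvd one_pos hp1
    omega
  have hdD : (d : ℤ) ≤ |D| := Int.le_of_dvd (abs_pos.mpr hD0) ((dvd_abs _ _).mpr hd)
  have hfst : ((4 * ε - 1) * p - 1) ^ 2 ≤ (5 * p + 1 : ℤ) ^ 2 := by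
    obtain ⟨hε₁, hε₂⟩ := abs_le.mp hε
    apply sq_le_sq' <;> nlinarith
  have hsnd : (p : ℤ) * k ^ 2 ≤ p * (4 * p + 6) ^ 2 :=
    mul_le_mul_of_nonneg_left (sq_le_sq' (abs_le.mp hk).1 (abs_le.mp hk).2) (by positivity)
  have hsq : 5 * (p : ℤ) ≤ p ^ 2 := by nlinarith [hp']
  have hcube : 5 * (p : ℤ) ^ 2 ≤ p ^ 3 := by nlinarith
  have hD3 : 3 * |D| ≤ (1 + 2 * (p : ℤ)) * (1 + 6 * p) * (1 + 8 * p) := by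
    have hfst0 := sq_nonneg ((4 * ε - 1) * p - 1)
    have hsnd0 : 0 ≤ (p : ℤ) * k ^ 2 := by positivity
    rcases abs_cases D with ⟨h, _⟩ | ⟨h, _⟩ <;> rw [h] <;> linarith
  zify
  linarith

theorem gcd_seqVal_graySeq_le [Fact p.Prime] (hp : 5 ≤ p) (hr : ∀ t, r t ≤ 1)
    (hs : ∀ t, s t ≤ 1) (hs0 : s 0 = 1) (hH : IsQuarticSign (bipolar p r)) {τ : ℤ}
    (hτ : τ ^ 2 = 1) (hrs : bipolar p r * bipolar p s = τ • ⇑(quadraticChar (ZMod p))) :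
    Nat.gcd (4 ^ p - 1) (seqVal p (graySeq r s)) ≤ (1 + 2 * p) * (1 + 6 * p) * (1 + 8 * p) := by
  set N := ∑ t ∈ Finset.range p, 4 ^ t
  set U := seqVal p (graySeq r s)
  have hN3 : 4 ^ p - 1 = 3 * N :=
    (geom_sum_mul_of_one_le (by norm_num : 1 ≤ 4) p).symm.trans (mul_comm _ _)
  have hN0 : 0 < N := Finset.sum_pos (fun _ _ ↦ by positivity) ⟨0, by simp; omega⟩
  obtain ⟨ε, k, hε, hk, hdvd⟩ := exists_dvd_sq_sub_mul_sq (by omega) hr hs hs0 hH hτ hrs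
    (Nat.gcd_dvd_left N U) (Nat.gcd_dvd_right N U)
  calc Nat.gcd (4 ^ p - 1) U = Nat.gcd (3 * N) U := by rw [hN3]
    _ ≤ 3 * Nat.gcd N U := by
      refine Nat.le_of_dvd (Nat.mul_pos three_pos (Nat.gcd_pos_of_pos_left _ hN0)) ?_
      exact (Nat.gcd_mul_left_dvd_mul_gcd _ _ _).trans
        (Nat.mul_dvd_mul_right (Nat.gcd_dvd_left _ _) _)
    _ ≤ (1 + 2 * p) * (1 + 6 * p) * (1 + 8 * p) := three_mul_le_of_dvd hp hε hk hdvd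

theorem floor_logb_le_adicComplexity4 (hp : p ≠ 0) {u : ℕ → ℕ} {B : ℝ}
    (hB : (Nat.gcd (4 ^ p - 1) (seqVal p u) : ℝ) ≤ B) :
    ⌊Real.logb 4 (((4 ^ p - 1 : ℕ) : ℝ) / B + 1)⌋ ≤ adicComplexity4 p u := by
  have hpow : 0 < 4 ^ p - 1 := Nat.sub_pos_of_lt (Nat.one_lt_pow hp (by norm_num))
  have hgcd : (0 : ℝ) < Nat.gcd (4 ^ p - 1) (seqVal p u) := by
    exact_mod_cast Nat.gcd_pos_of_pos_left _ hpow
  have hB0 : 0 < B := hgcd.trans_le hB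
  refine Int.floor_le_floor (Real.logb_le_logb_of_le (by norm_num) (by positivity) ?_)
  gcongr

theorem floor_logb_le_adicComplexity4_graySeq [Fact p.Prime] (hp : 5 ≤ p) (hr : ∀ t, r t ≤ 1)
    (hs : ∀ t, s t ≤ 1) (hs0 : s 0 = 1) (hH : IsQuarticSign (bipolar p r)) {τ : ℤ}
    (hτ : τ ^ 2 = 1) (hrs : bipolar p r * bipolar p s = τ • ⇑(quadraticChar (ZMod p))) :
    ⌊Real.logb 4 (((4 ^ p - 1 : ℕ) : ℝ) /
        ((1 + 2 * (p : ℝ)) * (1 + 6 * (p : ℝ)) * (1 + 8 * (p : ℝ))) + 1)⌋ ≤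
      adicComplexity4 p (graySeq r s) :=
  floor_logb_le_adicComplexity4 (by omega) (mod_cast gcd_seqVal_graySeq_le hp hr hs hs0 hH hτ hrs)

end QuaternarySequences

section CyclotomicClasses

variable {p θ : ℕ}

theorem seqS1_le_one (p θ t : ℕ) : seqS1 p θ t ≤ 1 := by
  unfold seqS1
  split_ifs <;> decide

theorem seqS2_le_one (p θ t : ℕ) : seqS2 p θ t ≤ 1 := by
  unfold seqS2
  split_ifs <;> decide

theorem seqS4_le_one (p θ t : ℕ) : seqS4 p θ t ≤ 1 := by
  unfold seqS4
  split_ifs <;> decide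

theorem seqCompl_le_one (s : ℕ → ℕ) (t : ℕ) : seqCompl s t ≤ 1 :=
  Nat.sub_le _ _

variable [Fact p.Prime] (hp4 : p % 4 = 1) (hθ : IsPrimitiveRoot (θ : ZMod p) (p - 1))

include hθ

theorem natCast_pow_ne_zero (k : ℕ) : (θ : ZMod p) ^ k ≠ 0 := by
  have hp := (Fact.out : p.Prime).one_lt
  exact pow_ne_zero k (hθ.ne_zero (by omega))

theorem exists_natCast_pow_eq {t : ZMod p} (ht : t ≠ 0) : ∃ k : ℕ, (θ : ZMod p) ^ k = t := by
  have : NeZero (p - 1) := ⟨(Nat.sub_pos_of_lt (Fact.out : p.Prime).one_lt).ne'⟩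
  obtain ⟨k, -, hk⟩ := hθ.eq_pow_of_pow_eq_one (ZMod.pow_card_sub_one_eq_one ht)
  exact ⟨k, hk⟩

theorem quadraticChar_natCast_pow (hp : p ≠ 2) (k : ℕ) :
    quadraticChar (ZMod p) ((θ : ZMod p) ^ k) = (-1) ^ k := by
  have hp2 := (Fact.out : p.Prime).two_le
  have hθ0 : (θ : ZMod p) ≠ 0 := hθ.ne_zero (by omega)
  have hodd := (Fact.out : p.Prime).eq_two_or_odd
  suffices h : quadraticChar (ZMod p) θ = -1 by rw [map_pow, h]
  rw [quadraticChar_neg_one_iff_not_isSquare, ZMod.euler_criterion p hθ0]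
  exact hθ.pow_ne_one_of_pos_of_lt (by omega) (by omega)

theorem isQuarticSign_of_pow (hp : p ≠ 2) {H : ZMod p → ℤ} (hH0 : H 0 = 0) {e : ℕ → ℕ}
    (he : ∀ j k, e (2 * j + k) = j + e k) (hH : ∀ k, H ((θ : ZMod p) ^ k) = (-1) ^ e k) :
    IsQuarticSign H where
  sq_eq_one t ht := by
    obtain ⟨k, rfl⟩ := exists_natCast_pow_eq hθ ht
    rw [hH, ← pow_mul, pow_mul', neg_one_sq, one_pow]
  map_sq_mul a t := by
    obtain rfl | ht := eq_or_ne t 0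
    · rw [mul_zero, hH0, mul_zero]
    obtain rfl | ha := eq_or_ne a 0
    · rw [zero_pow two_ne_zero, zero_mul, hH0, quadraticChar_zero, zero_mul]
    obtain ⟨j, rfl⟩ := exists_natCast_pow_eq hθ ha
    obtain ⟨k, rfl⟩ := exists_natCast_pow_eq hθ ht
    rw [← pow_mul', ← pow_add, hH, hH, he, pow_add, quadraticChar_natCast_pow hθ hp]

theorem zero_notMem_cycD (i : ℕ) : 0 ∉ cycD p θ i := by
  simp only [cycD, Finset.mem_image, not_exists, not_and]
  intro j _ h
  refine natCast_pow_ne_zero hθ (i + 4 * j) ?_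
  exact_mod_cast (ZMod.natCast_eq_zero_iff _ p).mpr (Nat.dvd_of_mod_eq_zero h)

theorem seqCompl_seqS2_zero : seqCompl (seqS2 p θ) 0 = 1 := by
  simp [seqCompl, seqS2, zero_notMem_cycD hθ]

theorem seqCompl_seqS4_zero : seqCompl (seqS4 p θ) 0 = 1 := by
  simp [seqCompl, seqS4, zero_notMem_cycD hθ]

theorem bipolar_natCast_pow (s : ℕ → ℕ) (k : ℕ) :
    bipolar p s ((θ : ZMod p) ^ k) = (-1) ^ s ((θ : ZMod p) ^ k).val :=
  bipolar_of_ne_zero s (natCast_pow_ne_zero hθ k)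

include hp4

theorem val_natCast_pow_mem_cycD {i : ℕ} (hi : i < 4) (k : ℕ) :
    ((θ : ZMod p) ^ k).val ∈ cycD p θ i ↔ k % 4 = i := by
  have hp1 := (Fact.out : p.Prime).one_lt
  have hpow_eq (j : ℕ) :
      θ ^ j % p = ((θ : ZMod p) ^ k).val ↔ j % (p - 1) = k % (p - 1) := by
    have hfin : IsOfFinOrder (θ : ZMod p) :=
      isOfFinOrder_iff_pow_eq_one.mpr ⟨p - 1, by omega, hθ.pow_eq_one⟩
    rw [← ZMod.val_natCast, Nat.cast_pow, (ZMod.val_injective p).eq_iff, hfin.pow_inj_mod,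
      ← hθ.eq_orderOf]
  have hmod : k % (p - 1) % 4 = k % 4 := Nat.mod_mod_of_dvd k (by omega)
  have hlt : k % (p - 1) < p - 1 := Nat.mod_lt k (by omega)
  simp only [cycD, Finset.mem_image, Finset.mem_range, hpow_eq]
  constructor
  · rintro ⟨j, hj, h⟩
    rw [Nat.mod_eq_of_lt (by omega)] at h
    omega
  · intro h
    refine ⟨k % (p - 1) / 4, by omega, ?_⟩
    rw [Nat.mod_eq_of_lt (by omega)]
    omega

theorem bipolar_seqS1_pow (k : ℕ) :
    bipolar p (seqS1 p θ) ((θ : ZMod p) ^ k) = (-1) ^ (k / 2 + 1) := by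
  rw [bipolar_natCast_pow hθ, neg_one_pow_congr]
  simp only [seqS1, Finset.mem_union, val_natCast_pow_mem_cycD hp4 hθ, Nat.zero_lt_succ,
    Nat.one_lt_ofNat, Nat.even_iff]
  split_ifs <;> simp only [false_iff, true_iff, Nat.zero_mod] <;> omega

theorem bipolar_seqS2_pow (k : ℕ) :
    bipolar p (seqS2 p θ) ((θ : ZMod p) ^ k) = (-1) ^ ((k + 1) / 2 + 1) := by
  rw [bipolar_natCast_pow hθ, neg_one_pow_congr]
  simp only [seqS2, Finset.mem_union, val_natCast_pow_mem_cycD hp4 hθ, Nat.zero_lt_succ,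
    Nat.lt_add_one, Nat.even_iff]
  split_ifs <;> simp only [false_iff, true_iff, Nat.zero_mod] <;> omega

theorem bipolar_seqS4_pow (k : ℕ) :
    bipolar p (seqS4 p θ) ((θ : ZMod p) ^ k) = (-1) ^ (k / 2) := by
  rw [bipolar_natCast_pow hθ, neg_one_pow_congr]
  simp only [seqS4, Finset.mem_union, val_natCast_pow_mem_cycD hp4 hθ, Nat.reduceLT,
    Nat.lt_add_one, Nat.even_iff]
  split_ifs <;> simp only [false_iff, true_iff, Nat.zero_mod] <;> omega

theorem isQuarticSign_bipolar_seqS1 : IsQuarticSign (bipolar p (seqS1 p θ)) :=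
  isQuarticSign_of_pow hθ (by omega) (bipolar_zero _ _) (e := fun k ↦ k / 2 + 1)
    (fun j k ↦ by omega) (bipolar_seqS1_pow hp4 hθ)

theorem isQuarticSign_bipolar_seqS2 : IsQuarticSign (bipolar p (seqS2 p θ)) :=
  isQuarticSign_of_pow hθ (by omega) (bipolar_zero _ _) (e := fun k ↦ (k + 1) / 2 + 1)
    (fun j k ↦ by omega) (bipolar_seqS2_pow hp4 hθ)

theorem bipolar_seqS1_mul_bipolar_seqS2 :
    bipolar p (seqS1 p θ) * bipolar p (seqS2 p θ) = quadraticChar (ZMod p) := by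
  funext t
  obtain rfl | ht := eq_or_ne t 0
  · simp [bipolar_zero]
  obtain ⟨k, rfl⟩ := exists_natCast_pow_eq hθ ht
  rw [Pi.mul_apply, bipolar_seqS1_pow hp4 hθ, bipolar_seqS2_pow hp4 hθ,
    quadraticChar_natCast_pow hθ (by omega), ← pow_add, neg_one_pow_congr]
  simp only [Nat.even_iff]
  omega

theorem bipolar_seqCompl_seqS4 : bipolar p (seqCompl (seqS4 p θ)) = bipolar p (seqS1 p θ) := by
  rw [bipolar_seqCompl (seqS4_le_one p θ)]
  funext t
  obtain rfl | ht := eq_or_ne t 0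
  · rw [Pi.neg_apply, bipolar_zero, bipolar_zero, neg_zero]
  obtain ⟨k, rfl⟩ := exists_natCast_pow_eq hθ ht
  rw [Pi.neg_apply, bipolar_seqS4_pow hp4 hθ, bipolar_seqS1_pow hp4 hθ, pow_succ, mul_neg_one]

end CyclotomicClasses

theorem theorem4_general {p : ℕ} (hp : p.Prime) (hp4 : p % 4 = 1) {θ : ℕ}
    (hθ : IsPrimitiveRoot (θ : ZMod p) (p - 1)) :
    ⌊Real.logb 4 (((4 ^ p - 1 : ℕ) : ℝ) /
        ((1 + 2 * (p : ℝ)) * (1 + 6 * (p : ℝ)) * (1 + 8 * (p : ℝ))) + 1)⌋ ≤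
      adicComplexity4 p (graySeq (seqS2 p θ) (seqCompl (seqS4 p θ))) ∧
    ⌊Real.logb 4 (((4 ^ p - 1 : ℕ) : ℝ) /
        ((1 + 2 * (p : ℝ)) * (1 + 6 * (p : ℝ)) * (1 + 8 * (p : ℝ))) + 1)⌋ ≤
      adicComplexity4 p (graySeq (seqCompl (seqS1 p θ)) (seqCompl (seqS2 p θ))) ∧
    ⌊Real.logb 4 (((4 ^ p - 1 : ℕ) : ℝ) /
        ((1 + 2 * (p : ℝ)) * (1 + 6 * (p : ℝ)) * (1 + 8 * (p : ℝ))) + 1)⌋ ≤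
      adicComplexity4 p (graySeq (seqCompl (seqS2 p θ)) (seqCompl (seqS4 p θ))) := by
  have : Fact p.Prime := ⟨hp⟩
  have hp5 : 5 ≤ p := by
    have := hp.two_le
    omega
  have hS1 := isQuarticSign_bipolar_seqS1 hp4 hθ
  have hS2 := isQuarticSign_bipolar_seqS2 hp4 hθ
  have hmul := bipolar_seqS1_mul_bipolar_seqS2 hp4 hθ
  have hS1' := bipolar_seqCompl (p := p) (seqS1_le_one p θ)
  have hS2' := bipolar_seqCompl (p := p) (seqS2_le_one p θ)
  have hS4' := bipolar_seqCompl_seqS4 hp4 hθ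
  refine ⟨?_, ?_, ?_⟩
  · refine floor_logb_le_adicComplexity4_graySeq hp5 (seqS2_le_one p θ) (seqCompl_le_one _)
      (seqCompl_seqS4_zero hθ) hS2 (τ := 1) (one_pow 2) ?_
    rw [hS4', mul_comm, hmul, one_smul]
  · refine floor_logb_le_adicComplexity4_graySeq hp5 (seqCompl_le_one _) (seqCompl_le_one _)
      (seqCompl_seqS2_zero hθ) (hS1' ▸ hS1.neg) (τ := 1) (one_pow 2) ?_
    rw [hS1', hS2', neg_mul_neg, hmul, one_smul]
  · refine floor_logb_le_adicComplexity4_graySeq hp5 (seqCompl_le_one _) (seqCompl_le_one _)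
      (seqCompl_seqS4_zero hθ) (hS2' ▸ hS2.neg) (τ := -1) neg_one_sq ?_
    rw [hS2', hS4', neg_mul, mul_comm, hmul, neg_one_smul]

theorem theorem4
    (p : ℕ) (hp : p.Prime) (hp8 : p % 8 = 5)
    (x y : ℤ) (hx : x % 4 = 1) (hxy : (p : ℤ) = x ^ 2 + 4 * y ^ 2)
    (θ : ℕ) (hθ : IsPrimitiveRoot (θ : ZMod p) (p - 1))
    (hy : 16 * (((cycD p θ 0).filter (fun a => (a + 1) % p ∈ cycD p θ 1)).card : ℤ)
        = (p : ℤ) + 1 + 2 * x - 8 * y)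
    :
    ⌊Real.logb 4 (((4 ^ p - 1 : ℕ) : ℝ) / (((1 + 2 * (p : ℝ)) * (1 + 6 * (p : ℝ)) * (1 + 8 * (p : ℝ)))) + 1)⌋ ≤
      adicComplexity4 p (graySeq (seqS2 p θ) (seqCompl (seqS4 p θ))) ∧
    ⌊Real.logb 4 (((4 ^ p - 1 : ℕ) : ℝ) / (((1 + 2 * (p : ℝ)) * (1 + 6 * (p : ℝ)) * (1 + 8 * (p : ℝ)))) + 1)⌋ ≤
      adicComplexity4 p (graySeq (seqCompl (seqS1 p θ)) (seqCompl (seqS2 p θ))) ∧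
    ⌊Real.logb 4 (((4 ^ p - 1 : ℕ) : ℝ) / (((1 + 2 * (p : ℝ)) * (1 + 6 * (p : ℝ)) * (1 + 8 * (p : ℝ)))) + 1)⌋ ≤
      adicComplexity4 p (graySeq (seqCompl (seqS2 p θ)) (seqCompl (seqS4 p θ))) := by
  exact theorem4_general hp (by omega) hθ
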